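/- arXiv:2203.02825 — 6 statements merged into one kernel-verified Lean document; each statement's English description precedes it below -/
import Mathlib

section
/- For all i, j ∈ {3, …, n} and every p ∈ ℝⁿ, the Lie brackets of the frame vector fields satisfy: [T, X_i](p) = [Z, X_i](p) = −(H_i(p)/2)·e₁ = −(H_i(p)/2)·(T(p) − Z(p)), [T, Z](p) = 0, and [X_i, X_j](p) = 0. -/
/-!
The derivatives of `T` and `Z` along `w` are both `(dH(w)/2) e₁`, since only the `e₁`-coefficient
varies, while each `X_i` is constant. This gives the brackets with `X_i` at once. It also gives
`[T, Z] = (dH(T - Z)/2) e₁ = (dH(e₁)/2) e₁`, which vanishes because `H` does not depend on `v`.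
-/

noncomputable section

/-- Points of ℝⁿ (dimension `n+3`, so that the dimension is at least 3):
coordinate `0` is `v`, coordinate `1` is `u`, coordinates `2,…,n+2` are the `xⁱ`. -/
abbrev V (n : ℕ) : Type := Fin (n+3) → ℝ

/-- The standard basis vectors. -/
def ee {n : ℕ} (i : Fin (n+3)) : V n := Pi.single i 1

/-- The standard Riemannian dual metric `g`. -/
def gg {n : ℕ} (H : V n → ℝ) (p : V n) (a b : V n) : ℝ :=
  2 * a 0 * b 0 + H p * (a 0 * b 1 + a 1 * b 0) + (1 + H p ^ 2) / 2 * (a 1 * b 1)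
    + ∑ i : Fin (n+3), if 2 ≤ (i : ℕ) then a i * b i else 0

/-- The vector field `T`. -/
def TT {n : ℕ} (H : V n → ℝ) (p : V n) : V n := ((H p + 1) / 2) • ee 0 - ee 1

/-- The vector field `Z`. -/
def ZZ {n : ℕ} (H : V n → ℝ) (p : V n) : V n := ((H p - 1) / 2) • ee 0 - ee 1

/-- The (constant) coordinate vector fields `X_i`. -/
def XX {n : ℕ} (i : Fin (n+3)) : V n → V n := fun _ => ee i

/-- Partial derivative of `H` in the `i`-th coordinate direction. -/
def Hd {n : ℕ} (H : V n → ℝ) (i : Fin (n+3)) (p : V n) : ℝ := fderiv ℝ H p (ee i)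

/-- `H` is independent of the first coordinate `v`. -/
def VIndep {n : ℕ} (H : V n → ℝ) : Prop :=
  ∀ (p : V n) (c : ℝ), H (Function.update p 0 c) = H p

/-- The Lie bracket of vector fields on ℝⁿ. -/
def br {n : ℕ} (a b : V n → V n) (p : V n) : V n :=
  fderiv ℝ b p (a p) - fderiv ℝ a p (b p)

/-- Differentiating `T = ((H+1)/2) e₁ - e₂`: only the `e₁`-coefficient varies. -/
lemma fderiv_TT {n : ℕ} {H : V n → ℝ} {p : V n} (hd : DifferentiableAt ℝ H p) (w : V n) :
    fderiv ℝ (TT H) p w = (fderiv ℝ H p w / 2) • ee 0 := by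
  have h : HasFDerivAt (TT H) (((2 : ℝ)⁻¹ • fderiv ℝ H p).smulRight (ee 0)) p := by
    change HasFDerivAt (fun q => ((H q + 1) / 2) • ee 0 - ee 1) _ p
    simpa only [div_eq_inv_mul] using
      (((hd.hasFDerivAt.add_const 1).const_mul (2 : ℝ)⁻¹).smul_const (ee 0 : V n)).sub_const (ee 1)
  rw [h.fderiv]
  simp [div_eq_inv_mul]

/-- The difference `T - Z` is the constant field `e₁`. -/
lemma TT_sub_ZZ {n : ℕ} (H : V n → ℝ) (p : V n) : TT H p - ZZ H p = ee 0 := by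
  simp only [TT, ZZ]
  module

/-- `T` and `Z` differ by a constant field, so they have the same derivative. -/
lemma fderiv_ZZ {n : ℕ} {H : V n → ℝ} {p : V n} (hd : DifferentiableAt ℝ H p) (w : V n) :
    fderiv ℝ (ZZ H) p w = (fderiv ℝ H p w / 2) • ee 0 := by
  have h : ZZ H = fun q => TT H q - ee 0 := by
    funext q
    rw [← TT_sub_ZZ H q, sub_sub_cancel]
  rw [h, fderiv_sub_const, fderiv_TT hd]

lemma fderiv_XX {n : ℕ} (i : Fin (n+3)) (p w : V n) : fderiv ℝ (XX i) p w = 0 := by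
  change fderiv ℝ (fun _ => ee i) p w = 0
  simp

/-- Independence of `v` kills the partial derivative of `H` along `e₁`. -/
lemma fderiv_ee_zero {n : ℕ} {H : V n → ℝ} {p : V n} (hd : DifferentiableAt ℝ H p)
    (hv : VIndep H) : fderiv ℝ H p (ee 0) = 0 := by
  rw [← hd.lineDeriv_eq_fderiv, lineDeriv]
  have h : (fun t : ℝ => H (p + t • ee 0)) = fun _ => H p := by
    funext t
    rw [← hv p (p 0 + t)]
    congr 1
    ext k
    by_cases hk : k = 0
    · subst hk; simp [ee]
    · simp [ee, hk]
  rw [h, deriv_const]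

/-- The Lie brackets of the frame vector fields satisfy
`[T,X_i] = [Z,X_i] = −(H_i/2)·e₁ = −(H_i/2)·(T − Z)`, `[T,Z] = 0` and `[X_i,X_j] = 0`. -/
theorem stmt_4 (n : ℕ) (H : V n → ℝ) (hH : ContDiff ℝ (⊤ : ℕ∞) H) (hHv : VIndep H) :
    ∀ p : V n,
      (∀ i : Fin (n+3), 2 ≤ (i : ℕ) →
        br (TT H) (XX i) p = -(Hd H i p / 2) • ee 0 ∧
        br (ZZ H) (XX i) p = -(Hd H i p / 2) • ee 0 ∧
        (-(Hd H i p / 2) • (ee 0 : V n)) = -(Hd H i p / 2) • (TT H p - ZZ H p)) ∧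
      br (TT H) (ZZ H) p = 0 ∧
      (∀ i j : Fin (n+3), 2 ≤ (i : ℕ) → 2 ≤ (j : ℕ) → br (XX i) (XX j) p = 0) := by
  intro p
  have hd : DifferentiableAt ℝ H p := hH.contDiffAt.differentiableAt (by simp)
  refine ⟨fun i _ => ⟨?_, ?_, ?_⟩, ?_, fun i j _ _ => ?_⟩
  · rw [br, fderiv_XX, fderiv_TT hd, zero_sub, neg_smul]
    rfl
  · rw [br, fderiv_XX, fderiv_ZZ hd, zero_sub, neg_smul]
    rfl
  · rw [TT_sub_ZZ]
  · rw [br, fderiv_ZZ hd, fderiv_TT hd, ← sub_smul, ← sub_div, ← map_sub, TT_sub_ZZ,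
      fderiv_ee_zero hd hHv, zero_div, zero_smul]
  · rw [br, fderiv_XX, fderiv_XX, sub_zero]
end
end

section
/- For every p ∈ ℝ^{2m}, the endomorphism J_p satisfies J_p ∘ J_p = −id, and J_p is compatible with g_p: g_p(J_p a, J_p b) = g_p(a, b) for all a, b ∈ ℝ^{2m}. Thus (g, J) is an almost Hermitian structure on ℝ^{2m}. -/
/-!
Since `e₀ = T - Z` and `e₁ = ((H+1)/2) e₀ - T`, the defining relations of `J` give
`J e₀ = H e₀ - 2 e₁` and `J e₁ = ((H²+1)/2) e₀ - H e₁`. Hence `J` preserves the plane of the first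
two coordinates, where both claims are polynomial identities in `H`, and acts on each pair
`(x^{2k+2}, x^{2k+3})` as a rotation by a right angle (`JStruct.apply_zero`, `JStruct.apply_one`,
`JStruct.apply_even`, `JStruct.apply_odd`). On the `x`-coordinates the Euclidean form is preserved
because `J` permutes the terms of the sum by the involution `swapIdx`, up to signs that cancel.
-/

noncomputable section

/- Even dimension: the dimension is `2*m+1+3 = 2(m+2)`, an arbitrary even number `≥ 4`
(the paper's `m` corresponds to our `m + 2`).  The "X" coordinates are the indices
`2, 3, …, 2m+3`, paired as `(2k+2, 2k+3)` for `k = 0, …, m`. -/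

/-- The defining properties of the almost complex structure `J`: `J T = Z`, `J Z = -T`,
`J X_{2k-1} = X_{2k}`, `J X_{2k} = -X_{2k-1}` (in the pairing described above). -/
def JStruct (m : ℕ) (H : V (2*m+1) → ℝ)
    (J : V (2*m+1) → (V (2*m+1) →ₗ[ℝ] V (2*m+1))) : Prop :=
  (∀ p, J p (TT H p) = ZZ H p) ∧
  (∀ p, J p (ZZ H p) = - TT H p) ∧
  (∀ p, ∀ (k : ℕ) (hk : k ≤ m),
    J p (ee (⟨2*k+2, by omega⟩ : Fin (2*m+1+3))) = ee ⟨2*k+3, by omega⟩) ∧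
  (∀ p, ∀ (k : ℕ) (hk : k ≤ m),
    J p (ee (⟨2*k+3, by omega⟩ : Fin (2*m+1+3))) = - ee ⟨2*k+2, by omega⟩)

/-- Every index is `0`, `1`, or belongs to one of the pairs `(2k+2, 2k+3)`. -/
lemma idx_cases (m : ℕ) (i : Fin (2*m+1+3)) :
    i = 0 ∨ i = 1 ∨ (∃ (k : ℕ) (hk : k ≤ m), i = ⟨2*k+2, by omega⟩) ∨
      (∃ (k : ℕ) (hk : k ≤ m), i = ⟨2*k+3, by omega⟩) := by
  obtain ⟨i, hi⟩ := i
  rcases Nat.even_or_odd' i with ⟨k, rfl | rfl⟩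
  · rcases k with _ | k
    · exact Or.inl rfl
    · exact Or.inr (Or.inr (Or.inl ⟨k, by omega, by ext; simp; omega⟩))
  · rcases k with _ | k
    · exact Or.inr (Or.inl rfl)
    · exact Or.inr (Or.inr (Or.inr ⟨k, by omega, by ext; simp; omega⟩))

lemma linearMap_ext_ee {m : ℕ} {W : Type*} [AddCommGroup W] [Module ℝ W]
    {f g : V (2*m+1) →ₗ[ℝ] W} (h0 : f (ee 0) = g (ee 0)) (h1 : f (ee 1) = g (ee 1))
    (he : ∀ (k : ℕ) (hk : k ≤ m), f (ee ⟨2*k+2, by omega⟩) = g (ee ⟨2*k+2, by omega⟩))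
    (ho : ∀ (k : ℕ) (hk : k ≤ m), f (ee ⟨2*k+3, by omega⟩) = g (ee ⟨2*k+3, by omega⟩)) :
    f = g := by
  refine (Pi.basisFun ℝ (Fin (2*m+1+3))).ext fun i => ?_
  rw [Pi.basisFun_apply]
  rcases idx_cases m i with rfl | rfl | ⟨k, hk, rfl⟩ | ⟨k, hk, rfl⟩
  · exact h0
  · exact h1
  · exact he k hk
  · exact ho k hk

section

variable {m : ℕ} {H : V (2*m+1) → ℝ} {J : V (2*m+1) → (V (2*m+1) →ₗ[ℝ] V (2*m+1))}

lemma JStruct.map_ee_zero (hJ : JStruct m H J) (p : V (2*m+1)) :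
    J p (ee 0) = H p • ee 0 - (2 : ℝ) • ee 1 := by
  have h : (ee 0 : V (2*m+1)) = TT H p - ZZ H p := by
    unfold TT ZZ; module
  rw [h, map_sub, hJ.1, hJ.2.1]
  unfold TT ZZ; module

lemma JStruct.map_ee_one (hJ : JStruct m H J) (p : V (2*m+1)) :
    J p (ee 1) = ((H p ^ 2 + 1) / 2) • ee 0 - H p • ee 1 := by
  have h : (ee 1 : V (2*m+1)) = ((H p + 1) / 2) • ee 0 - TT H p := by
    unfold TT; module
  rw [h, map_sub, map_smul, hJ.map_ee_zero, hJ.1]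
  unfold TT ZZ; module

lemma JStruct.apply_zero (hJ : JStruct m H J) (p a : V (2*m+1)) :
    J p a 0 = H p * a 0 + (H p ^ 2 + 1) / 2 * a 1 := by
  have key : (LinearMap.proj 0 : V (2*m+1) →ₗ[ℝ] ℝ) ∘ₗ J p =
      H p • LinearMap.proj 0 + ((H p ^ 2 + 1) / 2) • LinearMap.proj 1 := by
    apply linearMap_ext_ee
    · simp [hJ.map_ee_zero]; simp [ee]
    · simp [hJ.map_ee_one]; simp [ee]
    · intro k hk
      simp [hJ.2.2.1 p k hk]; simp [ee, Fin.ext_iff]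
    · intro k hk
      simp [hJ.2.2.2 p k hk]; simp [ee, Fin.ext_iff]
  simpa using LinearMap.congr_fun key a

lemma JStruct.apply_one (hJ : JStruct m H J) (p a : V (2*m+1)) :
    J p a 1 = -2 * a 0 - H p * a 1 := by
  have key : (LinearMap.proj 1 : V (2*m+1) →ₗ[ℝ] ℝ) ∘ₗ J p =
      (-2 : ℝ) • LinearMap.proj 0 - H p • LinearMap.proj 1 := by
    apply linearMap_ext_ee
    · simp [hJ.map_ee_zero]; simp [ee]
    · simp [hJ.map_ee_one]; simp [ee]
    · intro k hk
      simp [hJ.2.2.1 p k hk]; simp [ee, Fin.ext_iff]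
    · intro k hk
      simp [hJ.2.2.2 p k hk]; simp [ee, Fin.ext_iff]
  simpa using LinearMap.congr_fun key a

lemma JStruct.apply_even (hJ : JStruct m H J) (p a : V (2*m+1)) (k : ℕ) (hk : k ≤ m) :
    J p a ⟨2*k+2, by omega⟩ = - a ⟨2*k+3, by omega⟩ := by
  have key : (LinearMap.proj ⟨2*k+2, by omega⟩ : V (2*m+1) →ₗ[ℝ] ℝ) ∘ₗ J p =
      - LinearMap.proj ⟨2*k+3, by omega⟩ := by
    apply linearMap_ext_ee
    · simp [hJ.map_ee_zero]; simp [ee, Fin.ext_iff]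
    · simp [hJ.map_ee_one]; simp [ee, Fin.ext_iff]
    · intro j hj
      simp [hJ.2.2.1 p j hj]; simp [ee, Pi.single_apply, Fin.ext_iff]; grind
    · intro j hj
      simp [hJ.2.2.2 p j hj]; simp [ee, Pi.single_apply, Fin.ext_iff]
  simpa using LinearMap.congr_fun key a

lemma JStruct.apply_odd (hJ : JStruct m H J) (p a : V (2*m+1)) (k : ℕ) (hk : k ≤ m) :
    J p a ⟨2*k+3, by omega⟩ = a ⟨2*k+2, by omega⟩ := by
  have key : (LinearMap.proj ⟨2*k+3, by omega⟩ : V (2*m+1) →ₗ[ℝ] ℝ) ∘ₗ J p =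
      LinearMap.proj ⟨2*k+2, by omega⟩ := by
    apply linearMap_ext_ee
    · simp [hJ.map_ee_zero]; simp [ee, Fin.ext_iff]
    · simp [hJ.map_ee_one]; simp [ee, Fin.ext_iff]
    · intro j hj
      simp [hJ.2.2.1 p j hj]; simp [ee, Pi.single_apply, Fin.ext_iff]
    · intro j hj
      simp [hJ.2.2.2 p j hj]; simp [ee, Pi.single_apply, Fin.ext_iff]; grind
  simpa using LinearMap.congr_fun key a

/-- The involution of the indices exchanging the members of each pair `(2k, 2k+1)`,
including `(0, 1)`. -/
def swapIdx (m : ℕ) (i : Fin (2*m+1+3)) : Fin (2*m+1+3) :=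
  if h : (i : ℕ) % 2 = 0 then ⟨i + 1, by omega⟩ else ⟨i - 1, by omega⟩

lemma swapIdx_val (m : ℕ) (i : Fin (2*m+1+3)) :
    (swapIdx m i : ℕ) = if (i : ℕ) % 2 = 0 then (i : ℕ) + 1 else (i : ℕ) - 1 := by
  unfold swapIdx
  split_ifs <;> rfl

lemma swapIdx_involutive (m : ℕ) : Function.Involutive (swapIdx m) := by
  intro i
  ext
  rw [swapIdx_val, swapIdx_val]
  split_ifs <;> omega

lemma JStruct.sum_eq (hJ : JStruct m H J) (p a b : V (2*m+1)) :
    (∑ i : Fin (2*m+1+3), if 2 ≤ (i : ℕ) then J p a i * J p b i else 0) =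
      ∑ i : Fin (2*m+1+3), if 2 ≤ (i : ℕ) then a i * b i else 0 := by
  rw [← Equiv.sum_comp (swapIdx_involutive m).toPerm
    fun i : Fin (2*m+1+3) => if 2 ≤ (i : ℕ) then a i * b i else 0]
  refine Finset.sum_congr rfl fun i _ => ?_
  rcases idx_cases m i with rfl | rfl | ⟨k, hk, rfl⟩ | ⟨k, hk, rfl⟩
  · simp [swapIdx]
  · simp [swapIdx]
  · have hs : swapIdx m ⟨2*k+2, by omega⟩ = ⟨2*k+3, by omega⟩ := by
      simp [swapIdx]
    simp [hs, hJ.apply_even p _ k hk]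
  · have hs : swapIdx m ⟨2*k+3, by omega⟩ = ⟨2*k+2, by omega⟩ := by
      simp [swapIdx, Nat.add_mod]
    simp [hs, hJ.apply_odd p _ k hk]

end

/-- `J_p ∘ J_p = −id` and `J_p` is compatible with `g_p`:
`g_p(J_p a, J_p b) = g_p(a,b)`.  Thus `(g, J)` is an almost Hermitian structure. -/
theorem stmt_5 (m : ℕ) (H : V (2*m+1) → ℝ) (hH : ContDiff ℝ (⊤ : ℕ∞) H) (hHv : VIndep H)
    (J : V (2*m+1) → (V (2*m+1) →ₗ[ℝ] V (2*m+1))) (hJ : JStruct m H J) :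
    ∀ p : V (2*m+1),
      (∀ a : V (2*m+1), J p (J p a) = -a) ∧
      (∀ a b : V (2*m+1), gg H p (J p a) (J p b) = gg H p a b) := by
  intro p
  refine ⟨fun a => ?_, fun a b => ?_⟩
  · funext i
    rw [Pi.neg_apply]
    rcases idx_cases m i with rfl | rfl | ⟨k, hk, rfl⟩ | ⟨k, hk, rfl⟩
    · rw [hJ.apply_zero, hJ.apply_zero, hJ.apply_one]; ring
    · rw [hJ.apply_one, hJ.apply_zero, hJ.apply_one]; ring
    · rw [hJ.apply_even p _ k hk, hJ.apply_odd p _ k hk]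
    · rw [hJ.apply_odd p _ k hk, hJ.apply_even p _ k hk]
  · unfold gg
    rw [hJ.sum_eq, hJ.apply_zero, hJ.apply_zero, hJ.apply_one, hJ.apply_one]
    ring
end
end

section
/- For every k ∈ {2, …, m} and every p ∈ ℝ^{2m}, the Nijenhuis expression satisfies N(T, X_{2k−1})(p) = (1/2)(H_{2k−1}(p) − H_{2k}(p))·e₁ + (1/2)(H_{2k−1}(p) + H_{2k}(p))·J_p(e₁). -/
/-!
Since `J T = Z` and `J X_{2k-1} = X_{2k}`, the four brackets in `N(T, X_{2k-1})` are brackets of `T` or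
`Z` with a constant field `X_j`. Both `T` and `Z` are `(H / 2) e₁` plus a constant field, so each such
bracket equals `-(H_j / 2) e₁` (`br_affine_XX`); linearity of `J_p` then gives the formula.
-/

noncomputable section

/-- The vector field `Ja : p ↦ J_p(a(p))`. -/
def Jf (m : ℕ) (J : V (2*m+1) → (V (2*m+1) →ₗ[ℝ] V (2*m+1)))
    (a : V (2*m+1) → V (2*m+1)) : V (2*m+1) → V (2*m+1) :=
  fun p => J p (a p)

/-- The Nijenhuis expression `N(a,b) = [Ja,Jb] − J[Ja,b] − J[a,Jb] − [a,b]`. -/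
def Nij (m : ℕ) (J : V (2*m+1) → (V (2*m+1) →ₗ[ℝ] V (2*m+1)))
    (a b : V (2*m+1) → V (2*m+1)) (p : V (2*m+1)) : V (2*m+1) :=
  br (Jf m J a) (Jf m J b) p - J p (br (Jf m J a) b p) - J p (br a (Jf m J b) p)
    - br a b p

/-- The field `((H + r) / 2) e₁ - e₂` (here `e₁ = ee 0`, `e₂ = ee 1`), bracketed with the constant
field `X_j`, gives `-(H_j / 2) e₁`. This covers both `T` (`r = 1`) and `Z` (`r = -1`). -/
theorem br_affine_XX {n : ℕ} {H : V n → ℝ} {p : V n} (hH : DifferentiableAt ℝ H p)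
    (r : ℝ) (j : Fin (n+3)) :
    br (fun q => ((H q + r) / 2) • ee 0 - ee 1) (XX j) p = -((Hd H j p / 2) • ee 0) := by
  have hd : HasFDerivAt (fun q => ((H q + r) / 2) • (ee 0 : V n) - ee 1)
      (((2 : ℝ)⁻¹ • fderiv ℝ H p).smulRight (ee 0)) p := by
    simpa only [div_eq_inv_mul, Pi.smul_apply, smul_eq_mul] using
      (((hH.hasFDerivAt.add_const r).const_smul (2 : ℝ)⁻¹).smul_const (ee 0 : V n)).sub_const (ee 1)
  have hX : fderiv ℝ (XX j : V n → V n) p = 0 := by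
    unfold XX
    simp
  rw [br, hX, hd.fderiv]
  simp [XX, Hd, div_eq_inv_mul]

/-- For every `k` and every `p`,
`N(T, X_{2k−1})(p) = (1/2)(H_{2k−1}(p) − H_{2k}(p))·e₁ + (1/2)(H_{2k−1}(p) + H_{2k}(p))·J_p(e₁)`. -/
theorem stmt_7 (m : ℕ) (H : V (2*m+1) → ℝ) (hH : ContDiff ℝ (⊤ : ℕ∞) H) (hHv : VIndep H)
    (J : V (2*m+1) → (V (2*m+1) →ₗ[ℝ] V (2*m+1))) (hJ : JStruct m H J) :
    ∀ (k : ℕ) (hk : k ≤ m), ∀ p : V (2*m+1),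
      Nij m J (TT H) (XX (⟨2*k+2, by omega⟩ : Fin (2*m+1+3))) p
        = ((Hd H ⟨2*k+2, by omega⟩ p - Hd H ⟨2*k+3, by omega⟩ p) / 2) • ee 0
          + ((Hd H ⟨2*k+2, by omega⟩ p + Hd H ⟨2*k+3, by omega⟩ p) / 2) • J p (ee 0) := by
  intro k hk p
  obtain ⟨hT, -, hX, -⟩ := hJ
  have hd : DifferentiableAt ℝ H p := hH.differentiable (by simp) p
  have hJT : Jf m J (TT H) = ZZ H := funext hT
  have hJX : Jf m J (XX (⟨2*k+2, by omega⟩ : Fin (2*m+1+3))) = XX ⟨2*k+3, by omega⟩ :=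
    funext fun q => hX q k hk
  have hbT (j : Fin (2*m+1+3)) : br (TT H) (XX j) p = -((Hd H j p / 2) • ee 0) :=
    br_affine_XX hd 1 j
  have hbZ (j : Fin (2*m+1+3)) : br (ZZ H) (XX j) p = -((Hd H j p / 2) • ee 0) :=
    br_affine_XX hd (-1) j
  rw [Nij, hJT, hJX]
  simp only [hbT, hbZ, map_neg, map_smul]
  module
end
end

section
/- For every k ∈ {2, …, m} and every p ∈ ℝ^{2m}: N(T, X_{2k−1})(p) = 0 if and only if H_{2k−1}(p) = 0 and H_{2k}(p) = 0. Consequently, N(T, X_{2k−1}) vanishes identically on ℝ^{2m} for every k = 2, …, m if and only if H_i ≡ 0 for all i = 3, …, 2m; i.e., the almost complex structure J is not integrable unless all the partial derivatives H_i vanish identically. -/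
/-!
Since `X_i` is constant, `[T, X_i] = [Z, X_i] = -(H_i / 2) e₁`, where `e₁ = T - Z` (`ee 0` below), and
hence `J e₁ = T + Z`. Substituting these in the Nijenhuis expression gives
`N(T, X_{2k-1}) = H_{2k-1} T + H_{2k} Z` (`Nij_TT_XX`). As `T` and `Z` are linearly independent at
every point (`smul_TT_add_smul_ZZ_eq_zero_iff`), this vanishes exactly when both partial
derivatives do. The global claim follows because every index `≥ 2` is `2k+2` or `2k+3` for some `k ≤ m`.
-/

noncomputable section

lemma ee_zero_eq {n : ℕ} (H : V n → ℝ) (p : V n) : (ee 0 : V n) = TT H p - ZZ H p := by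
  simp only [TT, ZZ]
  module

/-- Both `T` and `Z` have the form `((H + c) / 2) e₁ - e₂`, so one bracket computation serves both. -/
lemma br_shift_XX {n : ℕ} {H : V n → ℝ} {p : V n} (hH : DifferentiableAt ℝ H p) (c : ℝ)
    (i : Fin (n+3)) :
    br (fun q => ((H q + c) / 2) • (ee 0 : V n) - ee 1) (XX i) p = -((Hd H i p / 2) • ee 0) := by
  have h : HasFDerivAt (fun q => ((H q + c) / 2) • (ee 0 : V n) - ee 1)
      (((2 : ℝ)⁻¹ • fderiv ℝ H p).smulRight (ee 0 : V n)) p := by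
    simpa only [div_eq_mul_inv] using
      (((hH.hasFDerivAt.add_const c).mul_const (2 : ℝ)⁻¹).smul_const (ee 0 : V n)).sub_const (ee 1)
  have hX : fderiv ℝ (XX i : V n → V n) p = 0 := fderiv_const_apply _
  simp only [br, h.fderiv, hX, XX, Hd, ContinuousLinearMap.smulRight_apply,
    smul_apply, zero_apply, zero_sub, smul_eq_mul]
  rw [div_eq_inv_mul]

lemma br_TT_XX {n : ℕ} {H : V n → ℝ} {p : V n} (hH : DifferentiableAt ℝ H p) (i : Fin (n+3)) :
    br (TT H) (XX i) p = -((Hd H i p / 2) • ee 0) :=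
  br_shift_XX hH 1 i

lemma br_ZZ_XX {n : ℕ} {H : V n → ℝ} {p : V n} (hH : DifferentiableAt ℝ H p) (i : Fin (n+3)) :
    br (ZZ H) (XX i) p = -((Hd H i p / 2) • ee 0) :=
  br_shift_XX hH (-1) i

lemma smul_TT_add_smul_ZZ_eq_zero_iff {n : ℕ} (H : V n → ℝ) (p : V n) (a b : ℝ) :
    a • TT H p + b • ZZ H p = 0 ↔ a = 0 ∧ b = 0 := by
  refine ⟨fun h => ?_, fun ⟨ha, hb⟩ => by simp [ha, hb]⟩
  have h0 := congrFun h 0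
  have h1 := congrFun h 1
  simp [TT, ZZ, ee] at h0 h1
  -- The `e₂`-coordinate gives `a + b = 0`; the `e₁`-coordinate then reduces to `a - b = 0`.
  have hb : b = -a := by linarith
  subst hb
  have ha : a = 0 := by linarith
  simp [ha]

lemma Nij_TT_XX {m : ℕ} {H : V (2*m+1) → ℝ} {J : V (2*m+1) → (V (2*m+1) →ₗ[ℝ] V (2*m+1))}
    (hJ : JStruct m H J) {p : V (2*m+1)} (hH : DifferentiableAt ℝ H p) (k : ℕ) (hk : k ≤ m) :
    Nij m J (TT H) (XX (⟨2*k+2, by omega⟩ : Fin (2*m+1+3))) p =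
      Hd H ⟨2*k+2, by omega⟩ p • TT H p + Hd H ⟨2*k+3, by omega⟩ p • ZZ H p := by
  obtain ⟨hT, hZ, hX, -⟩ := hJ
  have hJT : Jf m J (TT H) = ZZ H := funext hT
  have hJX : Jf m J (XX (⟨2*k+2, by omega⟩ : Fin (2*m+1+3))) = XX ⟨2*k+3, by omega⟩ :=
    funext fun q => hX q k hk
  simp only [Nij, hJT, hJX, br_TT_XX hH, br_ZZ_XX hH, ee_zero_eq H p, map_neg, map_smul, map_sub,
    hT, hZ]
  module

/-- For every `k` and every `p`, `N(T, X_{2k−1})(p) = 0` iff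
`H_{2k−1}(p) = 0` and `H_{2k}(p) = 0`.  Consequently, `N(T, X_{2k−1})` vanishes identically
for every `k` iff all the partial derivatives `H_i` vanish identically, i.e. `J` is not
integrable unless all the `H_i` vanish identically. -/
theorem stmt_8 (m : ℕ) (H : V (2*m+1) → ℝ) (hH : ContDiff ℝ (⊤ : ℕ∞) H) (hHv : VIndep H)
    (J : V (2*m+1) → (V (2*m+1) →ₗ[ℝ] V (2*m+1))) (hJ : JStruct m H J) :
    (∀ (k : ℕ) (hk : k ≤ m), ∀ p : V (2*m+1),
      Nij m J (TT H) (XX (⟨2*k+2, by omega⟩ : Fin (2*m+1+3))) p = 0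
        ↔ (Hd H ⟨2*k+2, by omega⟩ p = 0 ∧ Hd H ⟨2*k+3, by omega⟩ p = 0)) ∧
    ((∀ (k : ℕ) (hk : k ≤ m), ∀ p : V (2*m+1),
        Nij m J (TT H) (XX (⟨2*k+2, by omega⟩ : Fin (2*m+1+3))) p = 0)
      ↔ (∀ i : Fin (2*m+1+3), 2 ≤ (i : ℕ) → ∀ p : V (2*m+1), Hd H i p = 0)) := by
  have key : ∀ (k : ℕ) (hk : k ≤ m), ∀ p : V (2*m+1),
      Nij m J (TT H) (XX (⟨2*k+2, by omega⟩ : Fin (2*m+1+3))) p = 0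
        ↔ (Hd H ⟨2*k+2, by omega⟩ p = 0 ∧ Hd H ⟨2*k+3, by omega⟩ p = 0) := fun k hk p => by
    rw [Nij_TT_XX hJ ((hH.differentiable (by simp)) p) k hk, smul_TT_add_smul_ZZ_eq_zero_iff]
  refine ⟨key, fun h i hi p => ?_, fun h k hk p => ?_⟩
  · obtain ⟨i, hlt⟩ := i
    obtain ⟨k, rfl | rfl⟩ : ∃ k, i = 2*k+2 ∨ i = 2*k+3 := ⟨(i - 2) / 2, by simp at hi; omega⟩
    · exact ((key k (by omega) p).1 (h k (by omega) p)).1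
    · exact ((key k (by omega) p).1 (h k (by omega) p)).2
  · exact (key k hk p).2 ⟨h _ (by simp) p, h _ (by simp) p⟩
end
end

section
/- If γ = (v, u, x³, …, xⁿ) : I → ℝⁿ is a twice continuously differentiable solution of the geodesic system on an interval I, then the function t ↦ 2v̇(t) + u̇(t)·H(γ(t)) is constant on I. -/
/-!
Write `w = 2v̇ + u̇ H(γ)` and `S = ∑ H_i ẋⁱ`. Since `H` does not depend on `v` (`Hd_zero`), the chain
rule gives `d/dt H(γ) = H_u u̇ + S` (`fderiv_eq_of_vIndep`). Substituting the equations for `v̈` and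
`ü` in `ẇ = 2v̈ + ü H + u̇ (H_u u̇ + S)`, the terms `± w H S`, `± S u̇` and `± H_u u̇²` cancel, so
`ẇ = 0` on the interval and `w` is constant there.
-/

noncomputable section

/-- The geodesic equations of the standard Riemannian dual metric `g`:
`γ` is the curve, `γ'` its velocity and `γ''` its acceleration.
Coordinate `0` is `v`, coordinate `1` is `u`, coordinates `i ≥ 2` are the `xⁱ`. -/
def geo (n : ℕ) (H : V n → ℝ) (γ γ' γ'' : ℝ → V n) (t : ℝ) : Prop :=
  γ'' t 0 =
      (1/2) * (2 * γ' t 0 + γ' t 1 * H (γ t)) * H (γ t)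
          * (∑ i : Fin (n+3), if 2 ≤ (i : ℕ) then Hd H i (γ t) * γ' t i else 0)
        - (1/2) * (∑ i : Fin (n+3), if 2 ≤ (i : ℕ) then Hd H i (γ t) * γ' t i else 0)
            * γ' t 1
        - (1/2) * Hd H 1 (γ t) * (γ' t 1)^2 ∧
  γ'' t 1 =
      -(2 * γ' t 0 + γ' t 1 * H (γ t))
        * (∑ i : Fin (n+3), if 2 ≤ (i : ℕ) then Hd H i (γ t) * γ' t i else 0) ∧
  ∀ i : Fin (n+3), 2 ≤ (i : ℕ) →
    γ'' t i = (1/2) * (2 * γ' t 0 + γ' t 1 * H (γ t)) * Hd H i (γ t) * γ' t 1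

theorem Hd_zero {n : ℕ} {H : V n → ℝ} (hH : Differentiable ℝ H) (hHv : VIndep H) (p : V n) :
    Hd H 0 p = 0 := by
  have h1 : HasDerivAt (fun c : ℝ => H (Function.update p 0 c)) (Hd H 0 p) (p 0) := by
    have h2 := hasDerivAt_update p 0 (p 0)
    have h3 : HasFDerivAt H (fderiv ℝ H p) (Function.update p 0 (p 0)) := by
      rw [Function.update_eq_self]
      exact (hH p).hasFDerivAt
    exact h3.comp_hasDerivAt (p 0) h2
  have h4 : (fun c : ℝ => H (Function.update p 0 c)) = fun _ => H p := funext (hHv p)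
  rw [h4] at h1
  exact h1.unique (hasDerivAt_const (p 0) (H p))

/-- The differential of a `v`-independent function, split as in the geodesic equations into its
`u`-part and its `xⁱ`-part. -/
theorem fderiv_eq_of_vIndep {n : ℕ} {H : V n → ℝ} (hH : Differentiable ℝ H) (hHv : VIndep H)
    (p a : V n) :
    fderiv ℝ H p a = Hd H 1 p * a 1
      + ∑ i : Fin (n+3), if 2 ≤ (i : ℕ) then Hd H i p * a i else 0 := by
  have h1 : fderiv ℝ H p a = ∑ i : Fin (n+3), Hd H i p * a i := by
    conv_lhs => rw [pi_eq_sum_univ' a]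
    rw [map_sum]
    refine Finset.sum_congr rfl fun i _ => ?_
    rw [map_smul, smul_eq_mul, mul_comm, Hd, ee]
  have h0 := Hd_zero hH hHv p
  rw [h1]
  simp [Fin.sum_univ_succ, h0]

/-- If `γ` is a twice continuously differentiable solution of the geodesic
system on an (open) interval `s`, then `t ↦ 2v̇(t) + u̇(t)·H(γ(t))` is constant on `s`. -/
theorem stmt_9 (n : ℕ) (H : V n → ℝ) (hH : ContDiff ℝ (⊤ : ℕ∞) H) (hHv : VIndep H)
    (s : Set ℝ) (hs : IsOpen s) (hconv : Convex ℝ s)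
    (γ γ' γ'' : ℝ → V n)
    (hd1 : ∀ t ∈ s, HasDerivAt γ (γ' t) t)
    (hd2 : ∀ t ∈ s, HasDerivAt γ' (γ'' t) t)
    (hc : ContinuousOn γ'' s)
    (hgeo : ∀ t ∈ s, geo n H γ γ' γ'' t) :
    ∀ t₁ ∈ s, ∀ t₂ ∈ s,
      2 * γ' t₁ 0 + γ' t₁ 1 * H (γ t₁) = 2 * γ' t₂ 0 + γ' t₂ 1 * H (γ t₂) := by
  intro t₁ ht₁ t₂ ht₂
  have hdiff : Differentiable ℝ H := hH.differentiable (by simp)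
  have key : ∀ t ∈ s, HasDerivAt (fun t => 2 * γ' t 0 + γ' t 1 * H (γ t)) 0 t := by
    intro t ht
    have hv := hasDerivAt_pi.1 (hd2 t ht) 0
    have hu := hasDerivAt_pi.1 (hd2 t ht) 1
    have hHγ : HasDerivAt (fun t => H (γ t)) (fderiv ℝ H (γ t) (γ' t)) t :=
      (hdiff (γ t)).hasFDerivAt.comp_hasDerivAt t (hd1 t ht)
    rw [fderiv_eq_of_vIndep hdiff hHv] at hHγ
    obtain ⟨gv, gu, -⟩ := hgeo t ht
    refine ((hv.const_mul 2).add (hu.mul hHγ)).congr_deriv ?_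
    rw [gv, gu]
    ring
  exact hs.is_const_of_deriv_eq_zero hconv.isPreconnected
    (fun t ht => (key t ht).differentiableAt.differentiableWithinAt)
    (fun t ht => (key t ht).deriv) ht₁ ht₂
end
end

section
/- If γ = (v, u, x³, …, xⁿ) : I → ℝⁿ is a twice continuously differentiable solution of the geodesic system on an interval I, then the function t ↦ Σ_{i=3}^n ẋⁱ(t)² + (1/2)u̇(t)² is constant on I. In particular, along any solution each |ẋⁱ(t)| and |u̇(t)| is bounded by a constant determined by the initial velocity. -/
/-!
Differentiating `E = Σ ẋⁱ² + (1/2) u̇²` along a solution gives `E' = 2 Σ ẋⁱ ẍⁱ + u̇ ü`.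
With `W = 2v̇ + u̇H`, the equations for `ẍⁱ` turn the first term into `W u̇ Σ Hᵢ ẋⁱ`, and the
equation for `ü` turns the second into `-W u̇ Σ Hᵢ ẋⁱ`, so `E' = 0` (`hasDerivAt_energy`).
Hence `E` is constant on the convex set `s`, and the bounds follow since `E` is a sum of
nonnegative terms.
-/

noncomputable section

/-- The partial energy `Σ ẋⁱ² + (1/2) u̇²` of a velocity vector. -/
def energy {n : ℕ} (w : V n) : ℝ :=
  (∑ i : Fin (n+3), if 2 ≤ (i : ℕ) then (w i)^2 else 0) + (1/2) * (w 1)^2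

theorem hasDerivAt_energy {n : ℕ} {H : V n → ℝ} {γ γ' γ'' : ℝ → V n} {t : ℝ}
    (hd : HasDerivAt γ' (γ'' t) t) (hgeo : geo n H γ γ' γ'' t) :
    HasDerivAt (fun τ => energy (γ' τ)) 0 t := by
  have hcoord : ∀ i, HasDerivAt (fun τ => γ' τ i) (γ'' t i) t := hasDerivAt_pi.mp hd
  obtain ⟨-, hu, hx⟩ := hgeo
  have hsum : HasDerivAt
      (fun τ => ∑ i : Fin (n+3), if 2 ≤ (i : ℕ) then (γ' τ i)^2 else 0)
      (∑ i : Fin (n+3), ((2 * γ' t 0 + γ' t 1 * H (γ t)) * γ' t 1)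
        * (if 2 ≤ (i : ℕ) then Hd H i (γ t) * γ' t i else 0)) t := by
    refine HasDerivAt.fun_sum fun i _ => ?_
    by_cases hi : 2 ≤ (i : ℕ)
    · simp only [hi, if_true]
      refine ((hcoord i).fun_pow 2).congr_deriv ?_
      rw [hx i hi]
      push_cast
      ring
    · simpa only [hi, if_false, mul_zero] using hasDerivAt_const t (0 : ℝ)
  refine (hsum.add (((hcoord 1).fun_pow 2).const_mul (1/2))).congr_deriv ?_
  rw [hu, ← Finset.mul_sum]
  push_cast
  ring

theorem sum_sq_nonneg {n : ℕ} (w : V n) :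
    0 ≤ ∑ i : Fin (n+3), if 2 ≤ (i : ℕ) then (w i)^2 else 0 :=
  Finset.sum_nonneg fun i _ => by split_ifs <;> positivity

theorem sq_le_energy {n : ℕ} (w : V n) (i : Fin (n+3)) (hi : 2 ≤ (i : ℕ)) :
    (w i)^2 ≤ energy w := by
  have h := Finset.single_le_sum
    (f := fun j : Fin (n+3) => if 2 ≤ (j : ℕ) then (w j)^2 else 0)
    (fun j _ => by split_ifs <;> positivity) (Finset.mem_univ i)
  simp only [hi, if_true] at h
  unfold energy
  nlinarith [sq_nonneg (w 1)]

/-- If `γ` is a twice continuously differentiable solution of the geodesic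
system on an (open) interval `s`, then `t ↦ Σ_{i} ẋⁱ(t)² + (1/2)u̇(t)²` is constant on `s`;
in particular, along any solution each `ẋⁱ(t)²` and `u̇(t)²` is bounded by a constant
determined by the initial velocity. -/
theorem stmt_10 (n : ℕ) (H : V n → ℝ) (hH : ContDiff ℝ (⊤ : ℕ∞) H) (hHv : VIndep H)
    (s : Set ℝ) (hs : IsOpen s) (hconv : Convex ℝ s)
    (γ γ' γ'' : ℝ → V n)
    (hd1 : ∀ t ∈ s, HasDerivAt γ (γ' t) t)
    (hd2 : ∀ t ∈ s, HasDerivAt γ' (γ'' t) t)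
    (hc : ContinuousOn γ'' s)
    (hgeo : ∀ t ∈ s, geo n H γ γ' γ'' t) :
    (∀ t₁ ∈ s, ∀ t₂ ∈ s,
      (∑ i : Fin (n+3), if 2 ≤ (i : ℕ) then (γ' t₁ i)^2 else 0) + (1/2) * (γ' t₁ 1)^2
        = (∑ i : Fin (n+3), if 2 ≤ (i : ℕ) then (γ' t₂ i)^2 else 0)
            + (1/2) * (γ' t₂ 1)^2) ∧
    (∀ t₀ ∈ s, ∀ t ∈ s,
      (∀ i : Fin (n+3), 2 ≤ (i : ℕ) →
        (γ' t i)^2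
          ≤ (∑ j : Fin (n+3), if 2 ≤ (j : ℕ) then (γ' t₀ j)^2 else 0)
              + (1/2) * (γ' t₀ 1)^2) ∧
      (γ' t 1)^2
        ≤ 2 * ((∑ j : Fin (n+3), if 2 ≤ (j : ℕ) then (γ' t₀ j)^2 else 0)
            + (1/2) * (γ' t₀ 1)^2)) := by
  have hconst : ∀ t₁ ∈ s, ∀ t₂ ∈ s, energy (γ' t₁) = energy (γ' t₂) := by
    intro t₁ h₁ t₂ h₂
    have hE : ∀ t ∈ s, HasDerivAt (fun τ => energy (γ' τ)) 0 t := fun t ht =>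
      hasDerivAt_energy (hd2 t ht) (hgeo t ht)
    exact hs.is_const_of_deriv_eq_zero hconv.isPreconnected
      (fun t ht => (hE t ht).differentiableAt.differentiableWithinAt)
      (fun t ht => (hE t ht).deriv) h₁ h₂
  refine ⟨hconst, fun t₀ h₀ t ht => ⟨fun i hi => ?_, ?_⟩⟩
  · exact (sq_le_energy (γ' t) i hi).trans_eq (hconst t ht t₀ h₀)
  · have h := hconst t ht t₀ h₀
    have h' := sum_sq_nonneg (γ' t)
    unfold energy at h
    linarith
end
end
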